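/- Let G be a countable discrete group with a p.m.p. action σ on a probability space (X, ν) such that the diagonal action on (X², ν²) is weakly mixing. Suppose a measurable map b : G × X → 𝕋, a group homomorphism λ : G → 𝕋, and a measurable map t : X² → 𝕋 satisfy, for every g ∈ G, b(g, x) = b(g, y)·λ(g)·t(x, y)·t(g⁻¹x, g⁻¹y)⁻¹ for ν²-a.e. (x, y) ∈ X². Then t splits as a simple tensor: there exist measurable maps φ, ψ : X → 𝕋 such that t(x, y) = φ(x)·ψ(y) for ν²-a.e. (x, y) ∈ X². -/

import Mathlib

open MeasureTheory

noncomputable section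

namespace AlgActCohomology

/-- The Borel σ-algebra on the circle group `𝕋 = {z ∈ ℂ : |z| = 1}`. -/
noncomputable instance : MeasurableSpace Circle := borel Circle
instance : BorelSpace Circle := ⟨rfl⟩

variable {G X : Type*}

/-- The diagonal action on a product. -/
def diag (a : G → X → X) : G → X × X → X × X := fun g p => (a g p.1, a g p.2)

/-- An action is ergodic if every measurable set invariant under every group element
has measure 0 or 1. -/
def IsErgodicAction [MeasurableSpace X] (a : G → X → X) (μ : Measure X) : Prop :=
  ∀ s : Set X, MeasurableSet s → (∀ g : G, a g ⁻¹' s = s) → μ s = 0 ∨ μ s = 1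

/-- An action is weakly mixing if the diagonal action on the square
(with the product measure) is ergodic. -/
def IsWeaklyMixing [MeasurableSpace X] (a : G → X → X) (μ : Measure X) : Prop :=
  IsErgodicAction (diag a) (μ.prod μ)

/-- A (p.m.p.) group action: `a : G → X → X` is an action of `G` and every `a g`
is measure preserving. -/
structure IsPmpAction [Group G] [MeasurableSpace X] (a : G → X → X) (μ : Measure X) :
    Prop where
  act_one : ∀ x, a 1 x = x
  act_mul : ∀ g h x, a (g * h) x = a g (a h x)
  measurePreserving : ∀ g, MeasurePreserving (a g) μ μ

/-- An algebraic action: an action of `G` by continuous (automatically bijective)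
additive automorphisms of a compact abelian group `X`. -/
structure IsAlgebraicAction [Group G] [AddCommGroup X] [TopologicalSpace X]
    (a : G → X → X) : Prop where
  act_one : ∀ x, a 1 x = x
  act_mul : ∀ g h x, a (g * h) x = a g (a h x)
  continuous : ∀ g, Continuous (a g)
  act_add : ∀ g x y, a g (x + y) = a g x + a g y

/-- A measurable `𝕋`-valued 1-cocycle for an action. -/
def IsCocycle1 [Group G] [MeasurableSpace X] (a : G → X → X) (μ : Measure X)
    (c : G → X → Circle) : Prop :=
  (∀ g, Measurable (c g)) ∧ ∀ g h : G, ∀ᵐ x ∂μ, c (g * h) x = c g x * c h (a g⁻¹ x)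

/-- An action is `𝕋`-cocycle superrigid if every measurable `𝕋`-valued 1-cocycle is
cohomologous to a group homomorphism `G → 𝕋`. -/
def IsCocycleSuperrigid [Group G] [MeasurableSpace X] (a : G → X → X) (μ : Measure X) :
    Prop :=
  ∀ c : G → X → Circle, IsCocycle1 a μ c →
    ∃ (lam : G →* Circle) (b : X → Circle), Measurable b ∧
      ∀ g : G, ∀ᵐ x ∂μ, c g x = lam g * (b (a g⁻¹ x) * (b x)⁻¹)

section Char

variable (X) [AddCommGroup X] [TopologicalSpace X]

/-- The Pontryagin dual `X̂` of a compact abelian group `X`: the group of continuous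
characters `X → 𝕋`, as a subgroup of the group of all functions `X → 𝕋`. -/
def charGroup : Subgroup (X → Circle) where
  carrier := {χ | Continuous χ ∧ ∀ x y, χ (x + y) = χ x * χ y}
  one_mem' := ⟨continuous_const, fun _ _ => (one_mul 1).symm⟩
  mul_mem' := fun h1 h2 => ⟨h1.1.mul h2.1, fun x y => by
    simp only [Pi.mul_apply, h1.2 x y, h2.2 x y]; exact mul_mul_mul_comm _ _ _ _⟩
  inv_mem' := fun h => ⟨h.1.inv, fun x y => by
    simp only [Pi.inv_apply, h.2 x y, mul_inv]⟩

end Char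

section Degree1

variable [Group G] [AddCommGroup X] [TopologicalSpace X]

/-- `Z¹(G, X̂)`: 1-cocycles of `G` with coefficients in the dual module `X̂`,
where `(g • χ) x = χ (a g⁻¹ x)`. -/
def modZ1 (a : G → X → X) : Subgroup (G → charGroup X) where
  carrier := {c | ∀ (g h : G) (x : X),
    ((c (g * h) : X → Circle)) x = (c h : X → Circle) (a g⁻¹ x) * (c g : X → Circle) x}
  one_mem' := by
    intro g h x
    simp
  mul_mem' := by
    intro c₁ c₂ h1 h2 g h x
    simp only [Pi.mul_apply, Subgroup.coe_mul]
    rw [h1 g h x, h2 g h x]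
    ac_rfl
  inv_mem' := by
    intro c hc g h x
    simp only [Pi.inv_apply, InvMemClass.coe_inv]
    rw [hc g h x, mul_inv]

/-- `B¹(G, X̂)`: 1-coboundaries. -/
def modB1 (a : G → X → X) : Subgroup (G → charGroup X) where
  carrier := {c | ∃ χ : charGroup X, ∀ (g : G) (x : X),
    (c g : X → Circle) x = (χ : X → Circle) (a g⁻¹ x) * ((χ : X → Circle) x)⁻¹}
  one_mem' := ⟨1, by intro g x; simp⟩
  mul_mem' := by
    rintro c₁ c₂ ⟨χ₁, h1⟩ ⟨χ₂, h2⟩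
    refine ⟨χ₁ * χ₂, fun g x => ?_⟩
    simp only [Pi.mul_apply, Subgroup.coe_mul]
    rw [h1 g x, h2 g x, mul_inv]
    ac_rfl
  inv_mem' := by
    rintro c ⟨χ, h⟩
    refine ⟨χ⁻¹, fun g x => ?_⟩
    simp only [Pi.inv_apply, InvMemClass.coe_inv]
    rw [h g x, mul_inv, inv_inv]

variable [MeasurableSpace X]

/-- Measurable `𝕋`-valued 1-cocycles for an action, as a subgroup of all maps
`G → X → 𝕋`. -/
def measZ1 (a : G → X → X) (μ : Measure X) : Subgroup (G → X → Circle) where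
  carrier := {c | (∀ g, Measurable (c g)) ∧
    ∀ g h : G, ∀ᵐ x ∂μ, c (g * h) x = c g x * c h (a g⁻¹ x)}
  one_mem' := ⟨fun _ => measurable_const, fun g h => ae_of_all _ fun x => by simp⟩
  mul_mem' := by
    rintro c₁ c₂ ⟨m1, h1⟩ ⟨m2, h2⟩
    refine ⟨fun g => (m1 g).mul (m2 g), fun g h => ?_⟩
    filter_upwards [h1 g h, h2 g h] with x e1 e2
    simp only [Pi.mul_apply]
    rw [e1, e2]
    ac_rfl
  inv_mem' := by
    rintro c ⟨m, hc⟩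
    refine ⟨fun g => (m g).inv, fun g h => ?_⟩
    filter_upwards [hc g h] with x e
    simp only [Pi.inv_apply]
    rw [e, mul_inv]

/-- The subgroup of measurable 1-cocycles that are cohomologous to (the cocycle
induced by) a group homomorphism `G → 𝕋`; this is the preimage in `Z¹(G ↷ X; 𝕋)` of
the subgroup `Ψ₁(H¹(G, 𝕋))` of `H¹(G ↷ X; 𝕋)`, so that
`H¹(G ↷ X; 𝕋)/Ψ₁(H¹(G, 𝕋)) = measZ1 ⧸ measBPsi1`. -/
def measBPsi1 (a : G → X → X) (μ : Measure X) : Subgroup (G → X → Circle) where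
  carrier := {c | ∃ (φ : G →* Circle) (b : X → Circle), Measurable b ∧
    ∀ g : G, ∀ᵐ x ∂μ, c g x = φ g * (b (a g⁻¹ x) * (b x)⁻¹)}
  one_mem' := ⟨1, 1, measurable_const, fun g => ae_of_all _ fun x => by simp⟩
  mul_mem' := by
    rintro c₁ c₂ ⟨φ₁, b₁, hb₁, h1⟩ ⟨φ₂, b₂, hb₂, h2⟩
    refine ⟨φ₁ * φ₂, b₁ * b₂, hb₁.mul hb₂, fun g => ?_⟩
    filter_upwards [h1 g, h2 g] with x e1 e2
    simp only [Pi.mul_apply, MonoidHom.mul_apply]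
    rw [e1, e2, mul_inv]
    ac_rfl
  inv_mem' := by
    rintro c ⟨φ, b, hb, h⟩
    refine ⟨φ⁻¹, b⁻¹, hb.inv, fun g => ?_⟩
    filter_upwards [h g] with x e
    simp only [Pi.inv_apply, MonoidHom.inv_apply]
    rw [e, mul_inv, mul_inv, inv_inv]

/-- The measurable cocycle induced by a module cocycle: evaluation of characters. -/
def ind1 (c : G → charGroup X) : G → X → Circle := fun g => (c g : X → Circle)

end Degree1

section Degree2

variable [Group G]

/-- A `𝕋`-valued 2-cocycle of the group `G` (for the trivial `G`-module `𝕋`). -/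
def IsGrpCocycle2 (θ : G → G → Circle) : Prop :=
  ∀ g₁ g₂ g₃ : G, θ g₂ g₃ * (θ (g₁ * g₂) g₃)⁻¹ * θ g₁ (g₂ * g₃) * (θ g₁ g₂)⁻¹ = 1

private lemma mul4 {M : Type*} [CommGroup M] {a₁ b₁ c₁ d₁ a₂ b₂ c₂ d₂ : M}
    (h₁ : a₁ * b₁⁻¹ * c₁ * d₁⁻¹ = 1) (h₂ : a₂ * b₂⁻¹ * c₂ * d₂⁻¹ = 1) :
    (a₁ * a₂) * (b₁ * b₂)⁻¹ * (c₁ * c₂) * (d₁ * d₂)⁻¹ = 1 := by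
  have e : (a₁ * a₂) * (b₁ * b₂)⁻¹ * (c₁ * c₂) * (d₁ * d₂)⁻¹
      = (a₁ * b₁⁻¹ * c₁ * d₁⁻¹) * (a₂ * b₂⁻¹ * c₂ * d₂⁻¹) := by
    simp only [mul_inv]; ac_rfl
  rw [e, h₁, h₂, one_mul]

private lemma inv4 {M : Type*} [CommGroup M] {a b c d : M}
    (h : a * b⁻¹ * c * d⁻¹ = 1) : a⁻¹ * b * c⁻¹ * d = 1 := by
  have e : a⁻¹ * b * c⁻¹ * d = (a * b⁻¹ * c * d⁻¹)⁻¹ := by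
    simp only [mul_inv, inv_inv]; try ac_rfl
  rw [e, h, inv_one]

variable [AddCommGroup X] [TopologicalSpace X]

/-- `Z²(G, X̂)`: 2-cocycles of `G` with coefficients in the dual module `X̂`. -/
def modZ2 (a : G → X → X) : Subgroup (G → G → charGroup X) where
  carrier := {c | ∀ (g₁ g₂ g₃ : G) (x : X),
    (c g₂ g₃ : X → Circle) (a g₁⁻¹ x) * ((c (g₁ * g₂) g₃ : X → Circle) x)⁻¹ *
      (c g₁ (g₂ * g₃) : X → Circle) x * ((c g₁ g₂ : X → Circle) x)⁻¹ = 1}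
  one_mem' := by intro g₁ g₂ g₃ x; simp
  mul_mem' := by
    intro c₁ c₂ h1 h2 g₁ g₂ g₃ x
    simp only [Pi.mul_apply, Subgroup.coe_mul]
    exact mul4 (h1 g₁ g₂ g₃ x) (h2 g₁ g₂ g₃ x)
  inv_mem' := by
    intro c hc g₁ g₂ g₃ x
    simp only [Pi.inv_apply, InvMemClass.coe_inv, inv_inv]
    exact inv4 (hc g₁ g₂ g₃ x)

/-- `B²(G, X̂)`: 2-coboundaries. -/
def modB2 (a : G → X → X) : Subgroup (G → G → charGroup X) where
  carrier := {c | ∃ b : G → charGroup X, ∀ (g h : G) (x : X),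
    (c g h : X → Circle) x =
      (b h : X → Circle) (a g⁻¹ x) * ((b (g * h) : X → Circle) x)⁻¹ * (b g : X → Circle) x}
  one_mem' := ⟨1, by intro g h x; simp⟩
  mul_mem' := by
    rintro c₁ c₂ ⟨b₁, h1⟩ ⟨b₂, h2⟩
    refine ⟨b₁ * b₂, fun g h x => ?_⟩
    simp only [Pi.mul_apply, Subgroup.coe_mul]
    rw [h1 g h x, h2 g h x, mul_inv]
    try ac_rfl
  inv_mem' := by
    rintro c ⟨b, hb⟩
    refine ⟨b⁻¹, fun g h x => ?_⟩
    simp only [Pi.inv_apply, InvMemClass.coe_inv]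
    rw [hb g h x]
    simp only [mul_inv, inv_inv]
    try ac_rfl

variable [MeasurableSpace X]

/-- Measurable `𝕋`-valued 2-cocycles for an action. -/
def measZ2 (a : G → X → X) (μ : Measure X) : Subgroup (G → G → X → Circle) where
  carrier := {c | (∀ g h, Measurable (c g h)) ∧
    ∀ g₁ g₂ g₃ : G, ∀ᵐ x ∂μ,
      c g₂ g₃ (a g₁⁻¹ x) * (c (g₁ * g₂) g₃ x)⁻¹ * c g₁ (g₂ * g₃) x * (c g₁ g₂ x)⁻¹ = 1}
  one_mem' := ⟨fun _ _ => measurable_const, fun g₁ g₂ g₃ => ae_of_all _ fun x => by simp⟩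
  mul_mem' := by
    rintro c₁ c₂ ⟨m1, h1⟩ ⟨m2, h2⟩
    refine ⟨fun g h => (m1 g h).mul (m2 g h), fun g₁ g₂ g₃ => ?_⟩
    filter_upwards [h1 g₁ g₂ g₃, h2 g₁ g₂ g₃] with x e1 e2
    simp only [Pi.mul_apply]
    exact mul4 e1 e2
  inv_mem' := by
    rintro c ⟨m, hc⟩
    refine ⟨fun g h => (m g h).inv, fun g₁ g₂ g₃ => ?_⟩
    filter_upwards [hc g₁ g₂ g₃] with x e
    simp only [Pi.inv_apply, inv_inv]
    exact inv4 e

/-- The subgroup of measurable 2-cocycles that are cohomologous to a constant (in the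
space variable) 2-cocycle coming from a group 2-cocycle `θ : G² → 𝕋`; this is the
preimage in `Z²(G ↷ X; 𝕋)` of the subgroup `Ψ₂(H²(G, 𝕋))` of `H²(G ↷ X; 𝕋)`, so that
`H²(G ↷ X; 𝕋)/Ψ₂(H²(G, 𝕋)) = measZ2 ⧸ measBPsi2`. -/
def measBPsi2 (a : G → X → X) (μ : Measure X) : Subgroup (G → G → X → Circle) where
  carrier := {c | ∃ (θ : G → G → Circle) (b : G → X → Circle), IsGrpCocycle2 θ ∧
    (∀ g, Measurable (b g)) ∧
    ∀ g h : G, ∀ᵐ x ∂μ, c g h x = θ g h * (b h (a g⁻¹ x) * (b (g * h) x)⁻¹ * b g x)}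
  one_mem' := ⟨fun _ _ => 1, fun _ => 1, fun g₁ g₂ g₃ => by simp, fun _ => measurable_const,
    fun g h => ae_of_all _ fun x => by simp⟩
  mul_mem' := by
    rintro c₁ c₂ ⟨θ₁, b₁, hθ₁, hb₁, h1⟩ ⟨θ₂, b₂, hθ₂, hb₂, h2⟩
    refine ⟨fun g h => θ₁ g h * θ₂ g h, fun g => b₁ g * b₂ g,
      fun g₁ g₂ g₃ => mul4 (hθ₁ g₁ g₂ g₃) (hθ₂ g₁ g₂ g₃),
      fun g => (hb₁ g).mul (hb₂ g), fun g h => ?_⟩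
    filter_upwards [h1 g h, h2 g h] with x e1 e2
    simp only [Pi.mul_apply]
    rw [e1, e2]
    simp only [mul_inv]
    ac_rfl
  inv_mem' := by
    rintro c ⟨θ, b, hθ, hb, hc⟩
    refine ⟨fun g h => (θ g h)⁻¹, fun g => (b g)⁻¹,
      fun g₁ g₂ g₃ => by simpa only [inv_inv] using inv4 (hθ g₁ g₂ g₃),
      fun g => (hb g).inv, fun g h => ?_⟩
    filter_upwards [hc g h] with x e
    simp only [Pi.inv_apply]
    rw [e]
    simp only [mul_inv, inv_inv]
    try ac_rfl

/-- The measurable 2-cocycle induced by a module 2-cocycle: evaluation of characters. -/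
def ind2 (c : G → G → charGroup X) : G → G → X → Circle := fun g h => (c g h : X → Circle)

end Degree2

/-!
Translating `t` by a group element multiplies it by a simple tensor, and the cross-ratio
`t(x, y) t(x', y') / (t(x, y') t(x', y))` does not see simple tensor factors. The cross-ratio is
therefore invariant under the diagonal action on pairs of points of the product space, hence almost
everywhere constant by weak mixing; fixing one of the two points at a generic place then expresses
`t` as a simple tensor.
-/

section Ergodicity

variable [Group G] {a : G → X → X}

lemma preimage_iInter_preimage (ha_mul : ∀ g h x, a (g * h) x = a g (a h x)) (s : Set X) (h : G) :
    a h ⁻¹' (⋂ g, a g ⁻¹' s) = ⋂ g, a g ⁻¹' s := by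
  rw [Set.preimage_iInter]
  refine Set.iInter_congr_of_surjective (· * h) (mul_right_surjective h) fun g => ?_
  ext x
  simp only [Set.mem_preimage, ha_mul]

variable [MeasurableSpace X] {μ : Measure X}

lemma IsPmpAction.measurable (ha : IsPmpAction a μ) (g : G) : Measurable (a g) :=
  (ha.measurePreserving g).measurable

lemma IsErgodicAction.ae_mem_or_ae_notMem [Countable G] [IsProbabilityMeasure μ]
    (herg : IsErgodicAction a μ) (ha_mul : ∀ g h x, a (g * h) x = a g (a h x))
    (ha : ∀ g, Measurable (a g)) {s : Set X} (hs : MeasurableSet s)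
    (hinv : ∀ g, ∀ᵐ x ∂μ, a g x ∈ s ↔ x ∈ s) :
    (∀ᵐ x ∂μ, x ∈ s) ∨ ∀ᵐ x ∂μ, x ∉ s := by
  -- Ergodicity only sees strictly invariant sets, so `s` is replaced by the set of
  -- points whose whole orbit lies in `s`.
  let s' : Set X := ⋂ g, a g ⁻¹' s
  have hs' : MeasurableSet s' := .iInter fun g => ha g hs
  have mem_iff : ∀ᵐ x ∂μ, x ∈ s' ↔ x ∈ s := by
    filter_upwards [ae_all_iff.2 hinv] with x hx
    simp only [s', Set.mem_iInter, Set.mem_preimage, hx, forall_const]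
  rcases herg s' hs' (preimage_iInter_preimage ha_mul s) with h0 | h1
  · right
    filter_upwards [mem_iff, measure_eq_zero_iff_ae_notMem.1 h0] with x hx hx'
    rwa [← hx]
  · left
    filter_upwards [mem_iff, (mem_ae_iff_prob_eq_one hs').2 h1] with x hx hx'
    rwa [← hx]

lemma IsErgodicAction.exists_ae_eq_const [Countable G] [IsProbabilityMeasure μ]
    {T : Type*} [MeasurableSpace T] [MeasurableSpace.CountablySeparated T]
    (herg : IsErgodicAction a μ) (ha_mul : ∀ g h x, a (g * h) x = a g (a h x))
    (ha : ∀ g, Measurable (a g)) {F : X → T} (hF : Measurable F)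
    (hinv : ∀ g, F ∘ a g =ᵐ[μ] F) : ∃ c, F =ᵐ[μ] Function.const X c := by
  have : Nonempty T := (nonempty_of_isProbabilityMeasure μ).map F
  refine Filter.exists_eventuallyEq_const_of_forall_separating MeasurableSet fun U hU =>
    herg.ae_mem_or_ae_notMem ha_mul ha (s := F ⁻¹' U) (hF hU) fun g => ?_
  filter_upwards [hinv g] with x hx
  rw [Set.mem_preimage, Set.mem_preimage, ← hx, Function.comp_apply]

end Ergodicity

section CrossRatio

variable {Y T : Type*} [CommGroup T]

/-- The multiplicative cross-ratio `t(x, y) t(x', y') / (t(x, y') t(x', y))` of `t` at the pair of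
points `(x, y)`, `(x', y')`. It measures how far `t` is from being a simple tensor. -/
def crossRatio (t : X × Y → T) (q : (X × Y) × (X × Y)) : T :=
  t q.1 * t q.2 / (t (q.1.1, q.2.2) * t (q.2.1, q.1.2))

lemma crossRatio_tensor_mul (φ : X → T) (ψ : Y → T) (t : X × Y → T) :
    crossRatio (fun p => φ p.1 * ψ p.2 * t p) = crossRatio t := by
  funext q
  simp only [crossRatio, div_eq_div_iff_mul_eq_mul]
  ac_rfl

variable [MeasurableSpace X] [MeasurableSpace Y]

lemma crossRatio_congr_ae {μ : Measure X} {ν : Measure Y} [SFinite μ] [SFinite ν]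
    {s t : X × Y → T} (hst : s =ᵐ[μ.prod ν] t) :
    crossRatio s =ᵐ[(μ.prod ν).prod (μ.prod ν)] crossRatio t := by
  have mixed : Measure.QuasiMeasurePreserving (Prod.map Prod.fst Prod.snd)
      ((μ.prod ν).prod (μ.prod ν)) (μ.prod ν) :=
    QuasiMeasurePreserving.prodMap Measure.quasiMeasurePreserving_fst
      Measure.quasiMeasurePreserving_snd
  have mixed_swap := mixed.comp
    (Measure.measurePreserving_swap (μ := μ.prod ν) (ν := μ.prod ν)).quasiMeasurePreserving
  filter_upwards [Measure.quasiMeasurePreserving_fst.ae hst,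
    Measure.quasiMeasurePreserving_snd.ae hst, mixed.ae hst, mixed_swap.ae hst]
    with q h₁ h₂ h₃ h₄
  exact congr_arg₂ (· / ·) (congr_arg₂ (· * ·) h₁ h₂) (congr_arg₂ (· * ·) h₃ h₄)

variable [MeasurableSpace T]

lemma measurable_crossRatio [MeasurableMul₂ T] [MeasurableInv T] {t : X × Y → T}
    (ht : Measurable t) : Measurable (crossRatio t) := by
  unfold crossRatio
  fun_prop

lemma exists_ae_eq_tensor_of_crossRatio_ae_eq_const [MeasurableMul T] {μ : Measure X}
    {ν : Measure Y} [SFinite μ] [SFinite ν] {t : X × Y → T} (ht : Measurable t) {c : T}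
    (hc : crossRatio t =ᵐ[(μ.prod ν).prod (μ.prod ν)] Function.const _ c) :
    ∃ (φ : X → T) (ψ : Y → T), Measurable φ ∧ Measurable ψ ∧
      ∀ᵐ p ∂μ.prod ν, t p = φ p.1 * ψ p.2 := by
  obtain h0 | _ := eq_zero_or_neZero (μ.prod ν)
  · exact ⟨1, 1, measurable_one, measurable_one, by simp [h0]⟩
  -- For almost every base point `p`, the cross-ratio `c` expresses `t` through its slices at `p`.
  obtain ⟨p, hp⟩ := (Measure.ae_ae_of_ae_prod hc).exists
  refine ⟨fun x => c * (t p)⁻¹ * t (x, p.2), fun y => t (p.1, y), by fun_prop, by fun_prop, ?_⟩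
  filter_upwards [hp] with q hq
  have hq' : t p * t q = c * (t (p.1, q.2) * t (q.1, p.2)) := div_eq_iff_eq_mul.1 hq
  calc t q = (t p)⁻¹ * (c * (t (p.1, q.2) * t (q.1, p.2))) := eq_inv_mul_of_mul_eq hq'
    _ = c * (t p)⁻¹ * t (q.1, p.2) * t (p.1, q.2) := by ac_rfl

end CrossRatio

theorem t_splits_as_simple_tensor_general
    {Y T : Type*} [Group G] [Countable G] [MeasurableSpace X] [MeasurableSpace Y]
    [CommGroup T] [MeasurableSpace T] [MeasurableMul₂ T] [MeasurableInv T]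
    [MeasurableSpace.CountablySeparated T]
    (μ : Measure X) [IsProbabilityMeasure μ] (ν : Measure Y) [IsProbabilityMeasure ν]
    (a : G → X → X) (ha_mul : ∀ g h x, a (g * h) x = a g (a h x)) (ha : ∀ g, Measurable (a g))
    (a' : G → Y → Y) (ha'_mul : ∀ g h y, a' (g * h) y = a' g (a' h y))
    (ha' : ∀ g, Measurable (a' g))
    (hwm : IsWeaklyMixing (fun g => Prod.map (a g) (a' g)) (μ.prod ν))
    (b : G → X → T) (b' : G → Y → T) (t : X × Y → T) (ht : Measurable t)
    (h : ∀ g, ∀ᵐ p ∂μ.prod ν, b g p.1 = b' g p.2 * t p * (t (a g⁻¹ p.1, a' g⁻¹ p.2))⁻¹) :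
    ∃ (φ : X → T) (ψ : Y → T), Measurable φ ∧ Measurable ψ ∧
      ∀ᵐ p ∂μ.prod ν, t p = φ p.1 * ψ p.2 := by
  have translate (g : G) : t ∘ Prod.map (a g) (a' g) =ᵐ[μ.prod ν]
      fun p => (b g⁻¹ p.1)⁻¹ * b' g⁻¹ p.2 * t p := by
    filter_upwards [h g⁻¹] with p hp
    rw [hp, inv_inv, Function.comp_apply, Prod.map]
    group
  have invariant (g : G) : crossRatio t ∘ diag (fun g => Prod.map (a g) (a' g)) g
      =ᵐ[(μ.prod ν).prod (μ.prod ν)] crossRatio t :=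
    (crossRatio_congr_ae (translate g)).trans
      (.of_eq (crossRatio_tensor_mul (b g⁻¹)⁻¹ (b' g⁻¹) t))
  obtain ⟨c, hc⟩ := IsErgodicAction.exists_ae_eq_const hwm
    (fun g h q => by simp only [diag, Prod.map, ha_mul, ha'_mul])
    (fun g => ((ha g).prodMap (ha' g)).prodMap ((ha g).prodMap (ha' g)))
    (measurable_crossRatio ht) invariant
  exact exists_ae_eq_tensor_of_crossRatio_ae_eq_const ht hc

/-- (Splitting of the transfer map, after Furman.)  Suppose the
diagonal action of `G` on `(X², ν²)` is weakly mixing, and suppose a measurable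
`b : G × X → 𝕋`, a homomorphism `lam : G → 𝕋` and a measurable `t : X² → 𝕋` satisfy
`b g x = b g y * lam g * t (x, y) * t (g⁻¹x, g⁻¹y)⁻¹` for a.e. `(x, y)`.  Then `t`
splits as a simple tensor `t (x, y) = φ x * ψ y` a.e. -/
theorem t_splits_as_simple_tensor
    {G X : Type*} [Group G] [Countable G] [MeasurableSpace X]
    (ν : Measure X) [IsProbabilityMeasure ν]
    (a : G → X → X) (hpmp : IsPmpAction a ν)
    (hwm : IsWeaklyMixing (diag a) (ν.prod ν))
    (b : G → X → Circle) (hb : ∀ g : G, Measurable (b g))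
    (lam : G →* Circle) (t : X × X → Circle) (ht : Measurable t)
    (h : ∀ g : G, ∀ᵐ p : X × X ∂ν.prod ν,
      b g p.1 = b g p.2 * lam g * t p * (t (a g⁻¹ p.1, a g⁻¹ p.2))⁻¹) :
    ∃ φ ψ : X → Circle, Measurable φ ∧ Measurable ψ ∧
      ∀ᵐ p : X × X ∂ν.prod ν, t p = φ p.1 * ψ p.2 :=
  t_splits_as_simple_tensor_general ν ν a hpmp.act_mul hpmp.measurable
    a hpmp.act_mul hpmp.measurable hwm b (fun g y => b g y * lam g) t ht h

end AlgActCohomology
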